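/- Let A ∈ ℂ^{p×p} be a nonzero positive semidefinite matrix with relative rank r(A) = rank(A)/p, let α > 0, let μ₀ be the unique solution in (−λ_min⁺(A), ∞) of α = (1/p) Σ_{i: λ_i(A)>0} λ_i(A)²/(λ_i(A)+μ₀)², and for λ > λ₀ let μ be the unique solution in (μ₀, ∞) of λ = μ(1 − (1/(αp)) Σ_{i: λ_i(A)>0} λ_i(A)/(λ_i(A)+μ)). Then: if λ ≥ 0 then μ ≥ 0 (for any α > 0); if λ < 0 and α ≤ r(A) then μ ≥ 0; and if λ < 0 and α > r(A) then μ < 0, i.e., sign(μ) = sign(λ). -/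

import Mathlib

open Matrix Filter
open scoped ComplexOrder

/-- The smallest positive eigenvalue `λ_min⁺` of a Hermitian matrix. -/
noncomputable def lminp {p : ℕ} {A : Matrix (Fin p) (Fin p) ℂ} (hA : A.IsHermitian) : ℝ :=
  sInf {x : ℝ | 0 < x ∧ ∃ i, hA.eigenvalues i = x}

/-- The spectral sum `Σ_{i : eᵢ > 0} eᵢ / (eᵢ + μ)`; for a positive semidefinite matrix with
eigenvalues `e` and `A + μ I` invertible this equals `tr[A (A + μ I)⁻¹]`. -/
noncomputable def specSum1 {p : ℕ} (e : Fin p → ℝ) (μ : ℝ) : ℝ :=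
  ∑ i, if 0 < e i then e i / (e i + μ) else 0

/-- The spectral sum `Σ_{i : eᵢ > 0} eᵢ² / (eᵢ + μ)²`; for a positive semidefinite matrix with
eigenvalues `e` and `A + μ I` invertible this equals `tr[A² (A + μ I)⁻²]`. -/
noncomputable def specSum2 {p : ℕ} (e : Fin p → ℝ) (μ : ℝ) : ℝ :=
  ∑ i, if 0 < e i then (e i) ^ 2 / (e i + μ) ^ 2 else 0

/-! Write `r` for the number of positive `eᵢ`. If `μ < 0` lies above all poles `-eᵢ`, then every
ratio `eᵢ / (eᵢ + μ)` exceeds `1` and hence is exceeded by its square, so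
`r < specSum1 e μ < specSum2 e μ ≤ specSum2 e μ₀ = α p`; if `μ ≥ 0`, then `specSum1 e μ ≤ r`.
In `λ = μ (1 - specSum1 e μ / (α p))` the second factor is therefore positive as soon as `μ < 0` or
`r < α p`, and then `λ` and `μ` have the same sign. -/

section SpectralSums

variable {p : ℕ} {e : Fin p → ℝ} {μ ν : ℝ}

lemma specSum1_eq_sum_filter (e : Fin p → ℝ) (μ : ℝ) :
    specSum1 e μ = ∑ i with 0 < e i, e i / (e i + μ) :=
  (Finset.sum_filter _ _).symm

lemma specSum2_eq_sum_filter (e : Fin p → ℝ) (μ : ℝ) :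
    specSum2 e μ = ∑ i with 0 < e i, e i ^ 2 / (e i + μ) ^ 2 :=
  (Finset.sum_filter _ _).symm

lemma specSum1_le_card_pos (hμ : 0 ≤ μ) : specSum1 e μ ≤ Finset.card {i | 0 < e i} := by
  rw [specSum1_eq_sum_filter, Finset.cast_card]
  refine Finset.sum_le_sum fun i hi ↦ ?_
  have hei : 0 < e i := (Finset.mem_filter.mp hi).2
  exact div_le_one_of_le₀ (by linarith) (by linarith)

lemma specSum2_le_specSum2_of_le (hpole : ∀ i, 0 < e i → 0 < e i + μ) (hμν : μ ≤ ν) :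
    specSum2 e ν ≤ specSum2 e μ := by
  simp only [specSum2_eq_sum_filter]
  refine Finset.sum_le_sum fun i hi ↦ ?_
  have hpos : 0 < e i + μ := hpole i (Finset.mem_filter.mp hi).2
  gcongr

lemma card_pos_lt_specSum1 (he : ∃ i, 0 < e i) (hpole : ∀ i, 0 < e i → 0 < e i + μ) (hμ : μ < 0) :
    Finset.card {i | 0 < e i} < specSum1 e μ := by
  rw [specSum1_eq_sum_filter, Finset.cast_card]
  refine Finset.sum_lt_sum_of_nonempty (by simpa [Finset.filter_nonempty_iff] using he)
    fun i hi ↦ ?_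
  exact (one_lt_div (hpole i (Finset.mem_filter.mp hi).2)).mpr (by linarith)

lemma specSum1_lt_specSum2 (he : ∃ i, 0 < e i) (hpole : ∀ i, 0 < e i → 0 < e i + μ) (hμ : μ < 0) :
    specSum1 e μ < specSum2 e μ := by
  rw [specSum1_eq_sum_filter, specSum2_eq_sum_filter]
  refine Finset.sum_lt_sum_of_nonempty (by simpa [Finset.filter_nonempty_iff] using he)
    fun i hi ↦ ?_
  have hratio : 1 < e i / (e i + μ) :=
    (one_lt_div (hpole i (Finset.mem_filter.mp hi).2)).mpr (by linarith)
  rw [← div_pow]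
  exact lt_self_pow₀ hratio one_lt_two

end SpectralSums

lemma eigenvalues_add_pos_of_neg_lminp_lt {p : ℕ} {A : Matrix (Fin p) (Fin p) ℂ}
    {hA : A.IsHermitian} {μ : ℝ} (hμ : -lminp hA < μ) (i : Fin p) (hi : 0 < hA.eigenvalues i) :
    0 < hA.eigenvalues i + μ := by
  have hmin : lminp hA ≤ hA.eigenvalues i := csInf_le ⟨0, fun _ hx ↦ hx.1.le⟩ ⟨hi, i, rfl⟩
  linarith

section PosSemidef

variable {n 𝕜 : Type*} [Fintype n] [DecidableEq n] [RCLike 𝕜] {A : Matrix n n 𝕜}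

lemma rank_eq_card_pos_eigenvalues (hA : A.PosSemidef) :
    A.rank = Finset.card {i | 0 < hA.1.eigenvalues i} := by
  simp only [hA.1.rank_eq_card_non_zero_eigs, Fintype.card_subtype,
    (hA.eigenvalues_nonneg _).lt_iff_ne']

lemma exists_eigenvalues_pos (hA : A.PosSemidef) (hA0 : A ≠ 0) :
    ∃ i, 0 < hA.1.eigenvalues i := by
  obtain ⟨i, hi⟩ := Function.ne_iff.mp (hA.1.eigenvalues_eq_zero_iff.not.mpr hA0)
  exact ⟨i, (hA.eigenvalues_nonneg i).lt_of_ne' hi⟩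

end PosSemidef

lemma mul_one_sub_inv_mul_neg_iff {𝕜 : Type*} [Field 𝕜] [LinearOrder 𝕜] [IsStrictOrderedRing 𝕜]
    {c s x : 𝕜} (hc : 0 < c) (hsc : s < c) : x * (1 - c⁻¹ * s) < 0 ↔ x < 0 := by
  have hfactor : 0 < 1 - c⁻¹ * s := sub_pos.mpr ((inv_mul_lt_one₀ hc).mpr hsc)
  rw [mul_comm]
  exact smul_neg_iff_of_pos_left hfactor

/-- Joint signs of `λ` and `μ` (Remark 5.4): if `λ ≥ 0` then `μ ≥ 0`; if `λ < 0` and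
`α ≤ r(A)` then `μ ≥ 0`; and if `λ < 0` and `α > r(A)` then `μ < 0`. -/
theorem stmt14 {p : ℕ} (A : Matrix (Fin p) (Fin p) ℂ)
    (hA : A.PosSemidef) (hA0 : A ≠ 0)
    (α : ℝ) (hα : 0 < α) (μ₀ lam₀ lam μ : ℝ)
    (hμ₀ : -(lminp hA.1) < μ₀ ∧ α = (p : ℝ)⁻¹ * specSum2 hA.1.eigenvalues μ₀)
    (hlam₀ : lam₀ = μ₀ * (1 - (α * p)⁻¹ * specSum1 hA.1.eigenvalues μ₀))
    (hlam : lam₀ < lam)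
    (hμ : μ₀ < μ ∧ lam = μ * (1 - (α * p)⁻¹ * specSum1 hA.1.eigenvalues μ)) :
    (0 ≤ lam → 0 ≤ μ)
    ∧ (lam < 0 → α ≤ (A.rank : ℝ) / p → 0 ≤ μ)
    ∧ (lam < 0 → (A.rank : ℝ) / p < α → μ < 0) := by
  have he := exists_eigenvalues_pos hA hA0
  have hp : (0 : ℝ) < p := Nat.cast_pos.mpr he.choose.pos
  have hαp : specSum2 hA.1.eigenvalues μ₀ = α * p := by rw [hμ₀.2]; field_simp
  have hpole₀ := eigenvalues_add_pos_of_neg_lminp_lt hμ₀.1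
  have hpole := eigenvalues_add_pos_of_neg_lminp_lt (hμ₀.1.trans hμ.1)
  have hS_lt (hneg : μ < 0) : specSum1 hA.1.eigenvalues μ < α * p :=
    calc specSum1 hA.1.eigenvalues μ
      _ < specSum2 hA.1.eigenvalues μ := specSum1_lt_specSum2 he hpole hneg
      _ ≤ specSum2 hA.1.eigenvalues μ₀ := specSum2_le_specSum2_of_le hpole₀ hμ.1.le
      _ = α * p := hαp
  have hsign (hS : specSum1 hA.1.eigenvalues μ < α * p) : lam < 0 ↔ μ < 0 :=
    hμ.2 ▸ mul_one_sub_inv_mul_neg_iff (mul_pos hα hp) hS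
  rw [rank_eq_card_pos_eigenvalues hA, le_div_iff₀ hp, div_lt_iff₀ hp]
  refine ⟨fun hlam_nonneg ↦ ?_, fun _ hα_le ↦ ?_, fun hlam_neg hlt_α ↦ ?_⟩ <;> by_contra! hμ_sign
  · exact hlam_nonneg.not_gt ((hsign (hS_lt hμ_sign)).mpr hμ_sign)
  · exact hα_le.not_gt ((card_pos_lt_specSum1 he hpole hμ_sign).trans (hS_lt hμ_sign))
  · exact hμ_sign.not_gt ((hsign ((specSum1_le_card_pos hμ_sign).trans_lt hlt_α)).mp hlam_neg)
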